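/- Fix integers n ≥ 5, m ≥ 1, a real c, symmetric matrices H_1,…,H_m as in the context, and an integer k with 3 ≤ k ≤ ⌊n/2⌋. If Ric − α(n,k,H,c)·I_n is positive semidefinite and c + H² > 0, then for every integer q with 2 ≤ q ≤ k−1 one has the strict inequality Θ_q < q(n−q)c. -/

import Mathlib

open Finset

noncomputable def cF (n m : ℕ) (A : Fin m → Matrix (Fin n) (Fin n) ℝ) (a : Fin m) : ℝ :=
  (A a).trace / (n : ℝ)

noncomputable def HF (n m : ℕ) (A : Fin m → Matrix (Fin n) (Fin n) ℝ) : ℝ :=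
  Real.sqrt (∑ a : Fin m, cF n m A a ^ 2)

noncomputable def RicF (n m : ℕ) (c : ℝ) (A : Fin m → Matrix (Fin n) (Fin n) ℝ) :
    Matrix (Fin n) (Fin n) ℝ :=
  (((n : ℝ) - 1) * c) • (1 : Matrix (Fin n) (Fin n) ℝ) +
    ∑ a : Fin m, (((n : ℝ) * cF n m A a) • A a - A a * A a)

noncomputable def ThetaF (n m : ℕ) (A : Fin m → Matrix (Fin n) (Fin n) ℝ) (q : ℕ) : ℝ :=
  ∑ i ∈ Finset.univ.filter (fun i : Fin n => (i : ℕ) < q),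
    ∑ j ∈ Finset.univ.filter (fun j : Fin n => q ≤ (j : ℕ)),
      (2 * ∑ a : Fin m, (A a i j) ^ 2 - ∑ a : Fin m, A a i i * A a j j)

noncomputable def alphaF (n k : ℕ) (H c : ℝ) : ℝ :=
  ((n : ℝ) - 1 -
      (k : ℝ) * ((n : ℝ) - (k : ℝ)) * ((n : ℝ) - 2) /
        ((k : ℝ) * ((n : ℝ) - 2 * (k : ℝ)) + (n : ℝ) * ((k : ℝ) - 1) * ((n : ℝ) - (k : ℝ)))) *
    (c + H ^ 2)

/-!
Split the index set into a block `s` of size `q` and its complement of size `p = n - q`. For one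
symmetric matrix `M`, let `T₁` and `T₂` be the partial traces over the two blocks and `X` the
squared norm of the off-diagonal block. Cauchy–Schwarz bounds the trace of `tr M • M - M²` over `s`
by `T₁ T₂ + (1 - 1/q) T₁² - X`, and symmetrically over the complement. Weighting the two bounds by
`q (p - 1)` and `p (q - 1)` makes `T₁²` and `T₂²` appear with the same coefficient
`(p - 1) (q - 1)`, and `T₁² + T₂² = (tr M)² - 2 T₁ T₂`; as `p, q ≥ 2`, what remains is an upper
bound for `(n - 2) (2 X - T₁ T₂)`. Everything is linear in the Ricci term, so it can be summed over
the family: a lower bound for the Ricci diagonal gives an upper bound for `Θ_q`. That bound is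
strictly below `q (n - q) c` because `u (n - 2) / ((n + 2) u - n²)` is strictly decreasing in `u`
and `α(n, k, H, c)` is built from its value at `u = k (n - k)`.
-/

section SymmetricMatrix

variable {ι κ : Type*} [Fintype κ]

/-- The trace of the diagonal block of `M` indexed by `s`. -/
def partialTrace (M : Matrix ι ι ℝ) (s : Finset ι) : ℝ :=
  ∑ i ∈ s, M i i

lemma sq_partialTrace_le (M : Matrix ι ι ℝ) (s : Finset ι) :
    partialTrace M s ^ 2 ≤ #s * ∑ i ∈ s, ∑ j ∈ s, M i j ^ 2 :=
  calc partialTrace M s ^ 2 ≤ #s * ∑ i ∈ s, M i i ^ 2 := sq_sum_le_card_mul_sum_sq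
    _ ≤ #s * ∑ i ∈ s, ∑ j ∈ s, M i j ^ 2 := by
      gcongr with i hi
      exact single_le_sum (f := fun j => M i j ^ 2) (fun j _ => sq_nonneg _) hi

lemma card_mul_le_sum_partialTrace {G : κ → Matrix ι ι ℝ} {β : ℝ} (hβ : ∀ i, β ≤ ∑ a, G a i i)
    (s : Finset ι) : #s * β ≤ ∑ a, partialTrace (G a) s := by
  simp only [partialTrace]
  rw [sum_comm, ← nsmul_eq_mul]
  exact card_nsmul_le_sum s _ β fun i _ => hβ i

variable [Fintype ι]

/-- The contribution of a second fundamental form `M` to the Ricci tensor in the Gauss equation. -/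
def gaussRicci (M : Matrix ι ι ℝ) : Matrix ι ι ℝ :=
  M.trace • M - M * M

lemma partialTrace_gaussRicci (M : Matrix ι ι ℝ) (s : Finset ι) :
    partialTrace (gaussRicci M) s = M.trace * partialTrace M s - partialTrace (M * M) s := by
  simp only [partialTrace, gaussRicci, Matrix.sub_apply, Matrix.smul_apply, smul_eq_mul,
    sum_sub_distrib, mul_sum]

variable [DecidableEq ι]

/-- The squared Frobenius norm of the block of `M` with rows in `s` and columns in `sᶜ`. -/
def offBlockSq (M : Matrix ι ι ℝ) (s : Finset ι) : ℝ :=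
  ∑ i ∈ s, ∑ j ∈ sᶜ, M i j ^ 2

/-- The contribution of one matrix `M` to `Θ`, for an arbitrary set `s` of indices in place of the
first `q` ones. -/
def thetaTerm (M : Matrix ι ι ℝ) (s : Finset ι) : ℝ :=
  ∑ i ∈ s, ∑ j ∈ sᶜ, (2 * M i j ^ 2 - M i i * M j j)

lemma partialTrace_add_partialTrace_compl (M : Matrix ι ι ℝ) (s : Finset ι) :
    partialTrace M s + partialTrace M sᶜ = M.trace :=
  sum_add_sum_compl s fun i => M i i

lemma offBlockSq_nonneg (M : Matrix ι ι ℝ) (s : Finset ι) : 0 ≤ offBlockSq M s :=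
  sum_nonneg fun _ _ => sum_nonneg fun _ _ => sq_nonneg _

lemma offBlockSq_compl {M : Matrix ι ι ℝ} (hM : M.IsSymm) (s : Finset ι) :
    offBlockSq M sᶜ = offBlockSq M s := by
  simp only [offBlockSq, compl_compl]
  rw [sum_comm]
  simp only [hM.apply]

lemma thetaTerm_eq (M : Matrix ι ι ℝ) (s : Finset ι) :
    thetaTerm M s = 2 * offBlockSq M s - partialTrace M s * partialTrace M sᶜ := by
  rw [partialTrace, partialTrace, sum_mul_sum]
  simp only [thetaTerm, offBlockSq, sum_sub_distrib, mul_sum]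

lemma partialTrace_mul_self {M : Matrix ι ι ℝ} (hM : M.IsSymm) (s : Finset ι) :
    partialTrace (M * M) s = ∑ i ∈ s, ∑ j ∈ s, M i j ^ 2 + offBlockSq M s := by
  rw [partialTrace, offBlockSq, ← sum_add_distrib]
  refine sum_congr rfl fun i _ => ?_
  rw [sum_add_sum_compl, Matrix.mul_apply]
  exact sum_congr rfl fun j _ => by rw [hM.apply i j, sq]

lemma card_mul_partialTrace_gaussRicci_le {M : Matrix ι ι ℝ} (hM : M.IsSymm) (s : Finset ι) :
    #s * partialTrace (gaussRicci M) s ≤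
      #s * (partialTrace M s * partialTrace M sᶜ - offBlockSq M s) +
        (#s - 1) * partialTrace M s ^ 2 := by
  rw [partialTrace_gaussRicci, partialTrace_mul_self hM, ← partialTrace_add_partialTrace_compl M s]
  linarith [sq_partialTrace_le M s]

lemma cast_card_add_cast_card_compl (s : Finset ι) :
    (#s : ℝ) + #sᶜ = Fintype.card ι := by
  exact_mod_cast card_add_card_compl s

lemma card_sub_two_mul_thetaTerm_le {M : Matrix ι ι ℝ} (hM : M.IsSymm) {s : Finset ι}
    (hs : 2 ≤ #s) (hsc : 2 ≤ #sᶜ) :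
    ((Fintype.card ι : ℝ) - 2) * thetaTerm M s ≤
      (#s - 1) * (#sᶜ - 1) * M.trace ^ 2 -
        (#s * (#sᶜ - 1) * partialTrace (gaussRicci M) s +
          #sᶜ * (#s - 1) * partialTrace (gaussRicci M) sᶜ) := by
  have block := card_mul_partialTrace_gaussRicci_le hM s
  have block_compl := card_mul_partialTrace_gaussRicci_le hM sᶜ
  rw [compl_compl, offBlockSq_compl hM] at block_compl
  rw [thetaTerm_eq, ← cast_card_add_cast_card_compl s, ← partialTrace_add_partialTrace_compl M s]
  have hX := offBlockSq_nonneg M s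
  have hq : (2 : ℝ) ≤ #s := by exact_mod_cast hs
  have hp : (2 : ℝ) ≤ #sᶜ := by exact_mod_cast hsc
  generalize (#s : ℝ) = q at *
  generalize (#sᶜ : ℝ) = p at *
  have weighted := mul_le_mul_of_nonneg_left block (by linarith : 0 ≤ p - 1)
  have weighted_compl := mul_le_mul_of_nonneg_left block_compl (by linarith : 0 ≤ q - 1)
  have surplus : 0 ≤ (2 * q * p - (q + p) - 2 * (q + p - 2)) * offBlockSq M s :=
    mul_nonneg (by nlinarith) hX
  linarith

lemma card_sub_two_mul_sum_thetaTerm_le {A : κ → Matrix ι ι ℝ} (hA : ∀ a, (A a).IsSymm) {β : ℝ}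
    (hβ : ∀ i, β ≤ ∑ a, gaussRicci (A a) i i) {s : Finset ι} (hs : 2 ≤ #s) (hsc : 2 ≤ #sᶜ) :
    ((Fintype.card ι : ℝ) - 2) * ∑ a, thetaTerm (A a) s ≤
      (#s - 1) * (#sᶜ - 1) * ∑ a, (A a).trace ^ 2 -
        ((Fintype.card ι + 2) * (#s * #sᶜ) - Fintype.card ι ^ 2) * β := by
  have summed := sum_le_sum fun a (_ : a ∈ univ) => card_sub_two_mul_thetaTerm_le (hA a) hs hsc
  simp only [sum_sub_distrib, sum_add_distrib, ← mul_sum] at summed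
  have hq : (2 : ℝ) ≤ #s := by exact_mod_cast hs
  have hp : (2 : ℝ) ≤ #sᶜ := by exact_mod_cast hsc
  have lower : (#s : ℝ) * (#sᶜ - 1) * (#s * β) ≤
      #s * (#sᶜ - 1) * ∑ a, partialTrace (gaussRicci (A a)) s :=
    mul_le_mul_of_nonneg_left (card_mul_le_sum_partialTrace hβ s)
      (mul_nonneg (by linarith) (by linarith))
  have lower_compl : (#sᶜ : ℝ) * (#s - 1) * (#sᶜ * β) ≤
      #sᶜ * (#s - 1) * ∑ a, partialTrace (gaussRicci (A a)) sᶜ :=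
    mul_le_mul_of_nonneg_left (card_mul_le_sum_partialTrace hβ sᶜ)
      (mul_nonneg (by linarith) (by linarith))
  rw [← cast_card_add_cast_card_compl s] at summed ⊢
  linarith

end SymmetricMatrix

lemma strictAntiOn_mul_sub_two_div {n : ℝ} (hn : 2 < n) :
    StrictAntiOn (fun u => u * (n - 2) / ((n + 2) * u - n ^ 2)) {u | n ^ 2 < (n + 2) * u} := by
  intro u hu v hv huv
  rw [Set.mem_ofPred_eq, ← sub_pos] at hu hv
  rw [div_lt_div_iff₀ hv hu]
  have : 0 < (v - u) * (n - 2) * n ^ 2 :=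
    mul_pos (mul_pos (sub_pos.2 huv) (sub_pos.2 hn)) (by positivity)
  linarith

lemma mul_sub_lt_mul_sub {n x y : ℝ} (hxy : x < y) (hy : 2 * y ≤ n) :
    x * (n - x) < y * (n - y) := by
  nlinarith

lemma alphaF_eq (n k : ℕ) (H c : ℝ) :
    alphaF n k H c =
      ((n : ℝ) - 1 - k * (n - k) * (n - 2) / ((n + 2) * (k * (n - k)) - n ^ 2)) * (c + H ^ 2) := by
  rw [alphaF]
  congr 3
  ring

section Family

variable {n m : ℕ} (A : Fin m → Matrix (Fin n) (Fin n) ℝ)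

lemma natCast_mul_cF (a : Fin m) : n * cF n m A a = (A a).trace := by
  rcases eq_or_ne n 0 with rfl | hn
  · simp
  · exact mul_div_cancel₀ _ (Nat.cast_ne_zero.2 hn)

lemma sum_trace_sq : ∑ a, (A a).trace ^ 2 = n ^ 2 * HF n m A ^ 2 := by
  rw [HF, Real.sq_sqrt (sum_nonneg fun _ _ => sq_nonneg _), mul_sum]
  simp only [← natCast_mul_cF, mul_pow]

lemma RicF_apply_self (c : ℝ) (i : Fin n) :
    RicF n m c A i i = (n - 1) * c + ∑ a, gaussRicci (A a) i i := by
  simp [RicF, gaussRicci, natCast_mul_cF, Matrix.sum_apply]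

lemma ThetaF_eq_sum_thetaTerm (q : ℕ) :
    ThetaF n m A q = ∑ a, thetaTerm (A a) {i : Fin n | (i : ℕ) < q} := by
  simp only [ThetaF, thetaTerm, compl_filter, not_lt, mul_sum, ← sum_sub_distrib]
  rw [sum_comm (s := univ)]
  exact sum_congr rfl fun i _ => sum_comm

variable {A}

lemma sub_two_mul_ThetaF_le {c α : ℝ} (hA : ∀ a, (A a).IsSymm)
    (hRic : ∀ i, α ≤ RicF n m c A i i) {q : ℕ} (hq : 2 ≤ q) (hqn : q + 2 ≤ n) :
    ((n : ℝ) - 2) * ThetaF n m A q ≤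
      (q - 1) * (n - q - 1) * (n ^ 2 * HF n m A ^ 2) -
        ((n + 2) * (q * (n - q)) - n ^ 2) * (α - (n - 1) * c) := by
  have hβ (i : Fin n) : α - (n - 1) * c ≤ ∑ a, gaussRicci (A a) i i := by
    linarith [hRic i, RicF_apply_self A c i]
  have card_block : #{i : Fin n | (i : ℕ) < q} = q := by
    rw [Fin.card_filter_val_lt, min_eq_right (by omega)]
  have card_compl_block : #({i : Fin n | (i : ℕ) < q} : Finset (Fin n))ᶜ = n - q := by
    rw [card_compl, card_block, Fintype.card_fin]
  have bound := card_sub_two_mul_sum_thetaTerm_le hA hβ (card_block ▸ hq)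
    (by rw [card_compl_block]; omega)
  rwa [← ThetaF_eq_sum_thetaTerm, card_block, card_compl_block, Nat.cast_sub (by omega),
    Fintype.card_fin, sum_trace_sq] at bound

end Family

theorem stmt_11_general {n m : ℕ} {c : ℝ} {A : Fin m → Matrix (Fin n) (Fin n) ℝ}
    (hA : ∀ a, (A a).IsSymm) {k : ℕ} (hRic : ∀ i, alphaF n k (HF n m A) c ≤ RicF n m c A i i)
    (hpos : 0 < c + HF n m A ^ 2) {q : ℕ} (hq : 2 ≤ q) (hqn : q + 2 ≤ n)
    (hqk : (q : ℝ) * (n - q) < k * (n - k)) :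
    ThetaF n m A q < q * (n - q) * c := by
  have bound := sub_two_mul_ThetaF_le hA hRic hq hqn
  rw [alphaF_eq] at bound
  have hq' : (2 : ℝ) ≤ q := by exact_mod_cast hq
  have hqn' : (q : ℝ) + 2 ≤ n := by exact_mod_cast hqn
  have hD : (n : ℝ) ^ 2 < (n + 2) * (q * (n - q)) := by
    nlinarith [mul_nonneg (sub_nonneg.2 hq') (sub_nonneg.2 hqn')]
  set δ : ℝ := k * (n - k) * (n - 2) / ((n + 2) * (k * (n - k)) - n ^ 2)
  have hδ : δ < q * (n - q) * (n - 2) / ((n + 2) * (q * (n - q)) - n ^ 2) :=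
    strictAntiOn_mul_sub_two_div (by linarith) hD (hD.trans (by gcongr)) hqk
  rw [lt_div_iff₀ (sub_pos.2 hD)] at hδ
  refine lt_of_mul_lt_mul_left (a := (n : ℝ) - 2) ?_ (by linarith)
  calc ((n : ℝ) - 2) * ThetaF n m A q
      ≤ δ * ((n + 2) * (q * (n - q)) - n ^ 2) * (c + HF n m A ^ 2) -
          q * (n - q) * (n - 2) * HF n m A ^ 2 := by linarith
    _ < q * (n - q) * (n - 2) * (c + HF n m A ^ 2) - q * (n - q) * (n - 2) * HF n m A ^ 2 := by
        gcongr
    _ = (n - 2) * (q * (n - q) * c) := by ring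

theorem stmt_11 (n m : ℕ) (hn : 5 ≤ n) (hm : 1 ≤ m) (c : ℝ)
    (A : Fin m → Matrix (Fin n) (Fin n) ℝ) (hA : ∀ a : Fin m, (A a).IsSymm)
    (k : ℕ) (hk : 3 ≤ k) (hk' : k ≤ n / 2)
    (hRic : (RicF n m c A -
        alphaF n k (HF n m A) c • (1 : Matrix (Fin n) (Fin n) ℝ)).PosSemidef)
    (hpos : 0 < c + HF n m A ^ 2) :
    ∀ q : ℕ, 2 ≤ q → q ≤ k - 1 →
      ThetaF n m A q < (q : ℝ) * ((n : ℝ) - (q : ℝ)) * c := by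
  intro q hq hqk
  exact stmt_11_general hA (fun i => by simpa using hRic.diag_nonneg (i := i)) hpos hq (by omega)
    (mul_sub_lt_mul_sub (mod_cast (by omega : q < k)) (mod_cast (by omega : 2 * k ≤ n)))
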